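/- arXiv:2208.03180 — 5 statements merged into one kernel-verified Lean document; each statement's English description precedes it below -/
import Mathlib

section
/- Eigenvalue localization for the perturbed acoustic operator (Proposition 1.5 / Lemma 5.1). Let 0 < ν < 1/2, ε ∈ (0,1) and η := ε^{1−ν}. Let L_a(q̃, H̃, v, w) := (div_h v + ∂_z w, 0, ∇_h q̃, ∂_z q̃) and L_g(q̃, H̃, v, w) := (0, −w, 0, H̃) act on smooth fields (q̃, H̃, v, w) : 𝕋³ → ℝ×ℝ×ℝ²×ℝ satisfying the symmetry (SYM), and set L_ε := L_a + ηL_g. If iω (ω ∈ ℝ) is an eigenvalue of L_ε, that is, there exists a nonzero smooth field U with L_ε U = iωU, then there exists (k_h, k_z) ∈ (2πℤ)² × 2πℤ such that |k_h|² + k_z² ≤ ω² ≤ |k_h|² + k_z² + η². Here the numbers ±(|k_h|² + k_z²)^{1/2}, (k_h,k_z) ∈ (2πℤ)³, are exactly the moduli of the eigenvalues of L_a. -/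
open Complex

noncomputable section

/-- Spatial points of `ℝ³`; fields on the torus `𝕋³` are periodic functions on `ℝ³`. -/
abbrev Sp : Type := Fin 3 → ℝ

/-- Partial derivative of a complex-valued field in the `i`-th coordinate direction. -/
def pdC (i : Fin 3) (f : Sp → ℂ) : Sp → ℂ := fun p => fderiv ℝ f p (Pi.single i 1)

/-- Periodicity (period 1 in each coordinate): the function descends to `𝕋³`. -/
def PerC (f : Sp → ℂ) : Prop := ∀ (p : Sp) (i : Fin 3), f (p + Pi.single i 1) = f p

/-- Reflection of the vertical coordinate `z ↦ −z`. -/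
def reflect (p : Sp) : Sp := Function.update p 2 (-(p 2))

/-!
Each Fourier coefficient `(Q, G, V)` of an eigenfield at a frequency `k ∈ (2πℤ)ᵈ` solves the
algebraic system obtained from the eigenvalue equation by replacing `∂_j` with `i k_j`. Gravity may
act along any vector `g`; the theorem is the case `g = (0, 0, η)`. Eliminating `V` shows that `ω²`
is an eigenvalue of the Gram matrix of the pair `(k, g)`, so that
`(ω² - |k|²) (ω² - |g|²) = (k · g)² ≤ |k|² |g|²`. If `|g|² < ω²`, this forces
`|k|² ≤ ω² ≤ |k|² + |g|²`; otherwise the frequency `k = 0` already has the required property.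
-/

open MeasureTheory UnitAddTorus

variable {d : Type*} {E : Type*} [NormedAddCommGroup E]

section TorusProjection

lemma periodic_fderiv {𝕜 V : Type*} [NontriviallyNormedField 𝕜] [NormedAddCommGroup V]
    [NormedSpace 𝕜 V] [NormedSpace 𝕜 E] {f : V → E} {c : V} (hf : Function.Periodic f c) :
    Function.Periodic (fderiv 𝕜 f) c := by
  intro p
  rw [← fderiv_comp_add_right, hf.funext]

/-- The projection `ℝᵈ → 𝕋ᵈ`. -/
def torusProj : C(d → ℝ, UnitAddTorus d) where
  toFun p i := (p i : UnitAddCircle)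
  continuous_toFun := by fun_prop

lemma isOpenQuotientMap_torusProj : IsOpenQuotientMap (torusProj (d := d)) :=
  .piMap fun _ ↦ QuotientAddGroup.isOpenQuotientMap_mk

variable [DecidableEq d]

lemma torusProj_add_smul_single (p : d → ℝ) (j : d) (t : ℝ) :
    torusProj (p + t • Pi.single j 1) = torusProj p + Pi.single j (t : UnitAddCircle) := by
  ext i
  rcases eq_or_ne i j with rfl | hij <;> simp [torusProj, *]

lemma torusProj_add_single_one (p : d → ℝ) (j : d) :
    torusProj (p + Pi.single j 1) = torusProj p := by
  simpa only [one_smul, AddCircle.coe_period, Pi.single_zero, add_zero] using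
    torusProj_add_smul_single p j 1

lemma periodic_comp_torusProj {α : Type*} (F : UnitAddTorus d → α) (i : d) :
    Function.Periodic (F ∘ torusProj) (Pi.single i 1) :=
  fun p ↦ congrArg F (torusProj_add_single_one p i)

lemma hasDerivAt_comp_add_single [NormedSpace ℝ E] {F F' : UnitAddTorus d → E} {j : d}
    (hF : ∀ y, HasDerivAt (fun t : ℝ ↦ F (y + Pi.single j (t : UnitAddCircle))) (F' y) 0)
    (y : UnitAddTorus d) (t : ℝ) :
    HasDerivAt (fun s : ℝ ↦ F (y + Pi.single j (s : UnitAddCircle)))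
      (F' (y + Pi.single j (t : UnitAddCircle))) t := by
  have deriv_at_shift := hF (y + Pi.single j (t : UnitAddCircle))
  rw [← sub_self t] at deriv_at_shift
  convert! deriv_at_shift.comp_sub_const t t using 3 with s
  rw [add_assoc, ← Pi.single_add, ← AddCircle.coe_add, add_sub_cancel]

lemma factorsThrough_torusProj [Finite d] {α : Type*} {f : (d → ℝ) → α}
    (hf : ∀ i, Function.Periodic f (Pi.single i 1)) : Function.FactorsThrough f torusProj := by
  cases nonempty_fintype d
  intro p r hpr
  have exists_int (i : d) : ∃ m : ℤ, m • (1 : ℝ) = p i - r i :=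
    AddCircle.coe_eq_zero_iff 1 |>.mp <| by
      rw [AddCircle.coe_sub, sub_eq_zero]
      exact congrFun hpr i
  choose m hm using exists_int
  have hp : p = r + ∑ i, m i • Pi.single i (1 : ℝ) := by
    ext i
    rw [Pi.add_apply, ← sub_eq_iff_eq_add', ← hm i]
    simp [Finset.sum_apply, Pi.single_apply]
  have periodic_sum : Function.Periodic f (∑ i, m i • Pi.single i (1 : ℝ)) :=
    Finset.sum_induction _ (Function.Periodic f) (fun _ _ ↦ .add_period) (fun _ ↦ by simp)
      fun i _ ↦ (hf i).zsmul (m i)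
  rw [hp, periodic_sum]

lemma exists_comp_torusProj_eq [Finite d] {X : Type*} [TopologicalSpace X] {f : (d → ℝ) → X}
    (hc : Continuous f) (hf : ∀ i, Function.Periodic f (Pi.single i 1)) :
    ∃ F : C(UnitAddTorus d, X), F ∘ torusProj = f :=
  have factors : Function.FactorsThrough (⟨f, hc⟩ : C(d → ℝ, X)) torusProj :=
    factorsThrough_torusProj hf
  ⟨isOpenQuotientMap_torusProj.isQuotientMap.lift ⟨f, hc⟩ factors,
    congrArg DFunLike.coe (isOpenQuotientMap_torusProj.isQuotientMap.lift_comp ⟨f, hc⟩ factors)⟩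

end TorusProjection

section FourierCoefficients

variable [Fintype d] [NormedSpace ℂ E]

/-- The probability Haar measure on the torus, which is the measure used by
`UnitAddTorus.mFourierCoeff`. -/
abbrev torusMeasure (d : Type*) [Fintype d] : Measure (UnitAddTorus d) :=
  Measure.pi fun _ ↦ AddCircle.haarAddCircle

lemma mFourierCoeff_eq_integral_torusMeasure (f : UnitAddTorus d → E) (n : d → ℤ) :
    mFourierCoeff f n = ∫ y, mFourier (-n) y • f y ∂torusMeasure d :=
  rfl

lemma mFourier_apply_add (n : d → ℤ) (x y : UnitAddTorus d) :
    mFourier n (x + y) = mFourier n x * mFourier n y := by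
  simp [mFourier, AddCircle.toCircle_add, Finset.prod_mul_distrib]

lemma mFourier_apply_single [DecidableEq d] (n : d → ℤ) (j : d) (x : UnitAddCircle) :
    mFourier n (Pi.single j x) = fourier (n j) x := by
  rw [mFourier, ContinuousMap.coe_mk, Fintype.prod_eq_single j, Pi.single_eq_same]
  intro i hij
  rw [Pi.single_eq_of_ne hij, fourier_eval_zero]

lemma mFourierCoeff_comp_add_right (f : UnitAddTorus d → E) (n : d → ℤ) (a : UnitAddTorus d) :
    mFourierCoeff (fun y ↦ f (y + a)) n = mFourier n a • mFourierCoeff f n := by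
  have mFourier_cancel (y : UnitAddTorus d) :
      mFourier n a * mFourier (-n) (y + a) = mFourier (-n) y := by
    rw [mFourier_apply_add, mul_left_comm, ← mFourier_add, add_neg_cancel, mFourier_zero,
      ContinuousMap.one_apply, mul_one]
  simp only [mFourierCoeff_eq_integral_torusMeasure]
  rw [← integral_add_right_eq_self (fun y ↦ mFourier (-n) y • f y) a, ← integral_smul]
  simp only [smul_smul, mFourier_cancel]

lemma integrable_mFourier_smul (F : C(UnitAddTorus d, E)) (n : d → ℤ) :
    Integrable (fun y ↦ mFourier n y • F y) (torusMeasure d) :=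
  Continuous.integrable_of_hasCompactSupport (by fun_prop) (.of_compactSpace _)

/-- The `n`-th Fourier coefficient as a linear functional on continuous functions. -/
def mFourierCoeffLinear (n : d → ℤ) : C(UnitAddTorus d, E) →ₗ[ℂ] E where
  toFun F := mFourierCoeff F n
  map_add' F G := by
    simp only [mFourierCoeff_eq_integral_torusMeasure, ContinuousMap.add_apply, smul_add]
    exact integral_add (integrable_mFourier_smul F _) (integrable_mFourier_smul G _)
  map_smul' a F := by
    simp only [mFourierCoeff_eq_integral_torusMeasure, ContinuousMap.smul_apply,
      smul_comm _ a, integral_smul, RingHom.id_apply]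

lemma eq_zero_of_mFourierCoeffLinear_eq_zero {F : C(UnitAddTorus d, ℂ)}
    (hF : ∀ n, mFourierCoeffLinear n F = 0) : F = 0 := by
  have coeff_eq_zero : mFourierCoeff F = 0 := funext hF
  have summable_coeff : Summable (mFourierCoeff F) := by
    rw [coeff_eq_zero]
    exact summable_zero
  ext y
  have hasSum_F := hasSum_mFourier_series_apply_of_summable summable_coeff y
  simp only [coeff_eq_zero, Pi.zero_apply, zero_smul] at hasSum_F
  exact hasSum_F.unique hasSum_zero

variable {F F' : C(UnitAddTorus d, E)}

lemma norm_mFourier_smul_le (F : C(UnitAddTorus d, E)) (n : d → ℤ) (x y : UnitAddTorus d) :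
    ‖mFourier n x • F y‖ ≤ ‖F‖ := by
  rw [norm_smul]
  refine (mul_le_of_le_one_left (norm_nonneg _) ?_).trans (F.norm_coe_le_norm y)
  exact ((mFourier n).norm_coe_le_norm x).trans_eq mFourier_norm

lemma hasDerivAt_mFourierCoeff_comp_add {a : ℝ → UnitAddTorus d}
    (hF : ∀ y t, HasDerivAt (fun s ↦ F (y + a s)) (F' (y + a t)) t) (n : d → ℤ) (t : ℝ) :
    HasDerivAt (fun s ↦ mFourierCoeff (fun y ↦ F (y + a s)) n)
      (mFourierCoeff (fun y ↦ F' (y + a t)) n) t := by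
  have integrable_translate (G : C(UnitAddTorus d, E)) (s : ℝ) :
      Integrable (fun y ↦ mFourier (-n) y • G (y + a s)) (torusMeasure d) :=
    integrable_mFourier_smul (G.comp (.addRight (a s))) (-n)
  exact (hasDerivAt_integral_of_dominated_loc_of_deriv_le Filter.univ_mem
    (.of_forall fun s ↦ (integrable_translate F s).aestronglyMeasurable)
    (integrable_translate F t) (integrable_translate F' t).aestronglyMeasurable
    (.of_forall fun y s _ ↦ norm_mFourier_smul_le F' (-n) y (y + a s)) (integrable_const ‖F'‖)
    (.of_forall fun y s _ ↦ (hF y s).const_smul (mFourier (-n) y))).2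

variable [DecidableEq d] {j : d}

lemma mFourierCoeff_of_hasDerivAt
    (hF : ∀ y, HasDerivAt (fun t : ℝ ↦ F (y + Pi.single j (t : UnitAddCircle))) (F' y) 0)
    (n : d → ℤ) :
    mFourierCoeff F' n = (I * (2 * Real.pi * n j : ℝ)) • mFourierCoeff F n := by
  have deriv_coeff := hasDerivAt_mFourierCoeff_comp_add (hasDerivAt_comp_add_single hF) n 0
  simp only [mFourierCoeff_comp_add_right, mFourier_apply_single, AddCircle.coe_zero,
    fourier_eval_zero, one_smul] at deriv_coeff
  refine deriv_coeff.unique ?_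
  convert! (hasDerivAt_fourier 1 (n j) 0).smul_const (mFourierCoeff F n) using 2
  rw [AddCircle.coe_zero, fourier_eval_zero]
  push_cast
  ring

lemma exists_partialDeriv_mFourierCoeffLinear
    (hF : ContDiff ℝ 1 (F ∘ torusProj)) (j : d) :
    ∃ F' : C(UnitAddTorus d, E),
      (∀ p, F' (torusProj p) = fderiv ℝ (F ∘ torusProj) p (Pi.single j 1)) ∧
      ∀ n, mFourierCoeffLinear n F' = (I * (2 * Real.pi * n j : ℝ)) • mFourierCoeffLinear n F := by
  obtain ⟨F', hF'⟩ := exists_comp_torusProj_eq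
    (f := fun p ↦ fderiv ℝ (F ∘ torusProj) p (Pi.single j 1))
    ((hF.continuous_fderiv one_ne_zero).clm_apply continuous_const)
    fun i p ↦ DFunLike.congr_fun (periodic_fderiv (periodic_comp_torusProj F i) p) _
  refine ⟨F', congrFun hF', mFourierCoeff_of_hasDerivAt fun y ↦ ?_⟩
  obtain ⟨p, rfl⟩ := isOpenQuotientMap_torusProj.surjective y
  simp only [← torusProj_add_smul_single]
  rw [← Function.comp_apply (f := F'), hF']
  exact (hF.differentiable one_ne_zero p).hasFDerivAt.hasLineDerivAt (Pi.single j 1)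

end FourierCoefficients

section Eigenmodes

variable [Fintype d]

/-- The eigenvalue equation `LU = iωU` at the level of Fourier coefficients `U = (Q, G, V)` at the
frequency `k`, where `L` is the operator in `IsEigenfield`. -/
structure IsEigenmode (k g : d → ℝ) (ω : ℝ) (Q G : ℂ) (V : d → ℂ) : Prop where
  divergence : ∑ j, I * k j * V j = I * ω * Q
  buoyancy : -∑ j, g j * V j = I * ω * G
  gradient : ∀ j, I * k j * Q + g j * G = I * ω * V j

variable {k g : d → ℝ} {ω : ℝ} {Q G : ℂ} {V : d → ℂ}

lemma IsEigenmode.mul_velocity (hU : IsEigenmode k g ω Q G V) (j : d) :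
    ω * V j = k j * Q - I * g j * G := by
  linear_combination I * hU.gradient j + (ω * V j - k j * Q) * I_sq

lemma IsEigenmode.gram_left (hU : IsEigenmode k g ω Q G V) :
    ((ω ^ 2 - ∑ j, k j ^ 2 : ℝ) : ℂ) * Q = -I * (∑ j, k j * g j : ℝ) * G := by
  have dot_velocity : ∑ j, k j * V j = ω * Q := by
    refine mul_left_cancel₀ I_ne_zero ?_
    simpa only [Finset.mul_sum, mul_assoc] using hU.divergence
  have elimination : (ω : ℂ) ^ 2 * Q = (∑ j, (k j : ℂ) ^ 2) * Q - I * (∑ j, (k j * g j : ℂ)) * G :=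
    calc (ω : ℂ) ^ 2 * Q = ∑ j, k j * (ω * V j) := by
          rw [pow_two, mul_assoc, ← dot_velocity, Finset.mul_sum]
          simp only [mul_left_comm]
      _ = _ := by
          simp only [hU.mul_velocity, Finset.mul_sum, Finset.sum_mul, ← Finset.sum_sub_distrib]
          exact Finset.sum_congr rfl fun j _ ↦ by ring
  push_cast
  linear_combination elimination

lemma IsEigenmode.gram_right (hU : IsEigenmode k g ω Q G V) :
    ((ω ^ 2 - ∑ j, g j ^ 2 : ℝ) : ℂ) * G = I * (∑ j, k j * g j : ℝ) * Q := by
  have dot_velocity : I * ∑ j, g j * V j = ω * G := by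
    linear_combination -I * hU.buoyancy - ω * G * I_sq
  have elimination : (ω : ℂ) ^ 2 * G = (∑ j, (g j : ℂ) ^ 2) * G + I * (∑ j, (k j * g j : ℂ)) * Q :=
    calc (ω : ℂ) ^ 2 * G = ∑ j, I * g j * (ω * V j) := by
          rw [pow_two, mul_assoc, ← dot_velocity, Finset.mul_sum, Finset.mul_sum]
          exact Finset.sum_congr rfl fun j _ ↦ by ring
      _ = _ := by
          simp only [hU.mul_velocity, Finset.mul_sum, Finset.sum_mul, ← Finset.sum_add_distrib]
          exact Finset.sum_congr rfl fun j _ ↦ by linear_combination -(g j ^ 2 * G : ℂ) * I_sq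
  push_cast
  linear_combination elimination

lemma IsEigenmode.gram_det (hU : IsEigenmode k g ω Q G V) (hω : ω ≠ 0)
    (hne : ¬(Q = 0 ∧ G = 0 ∧ V = 0)) :
    (ω ^ 2 - ∑ j, k j ^ 2) * (ω ^ 2 - ∑ j, g j ^ 2) = (∑ j, k j * g j) ^ 2 := by
  have scalars_ne : Q ≠ 0 ∨ G ≠ 0 := by
    by_contra! h
    refine hne ⟨h.1, h.2, funext fun j ↦ ?_⟩
    simpa [h.1, h.2, hω] using hU.mul_velocity j
  have left := hU.gram_left
  have right := hU.gram_right
  rw [← ofReal_inj, ofReal_mul, ofReal_pow]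
  generalize ((ω ^ 2 - ∑ j, k j ^ 2 : ℝ) : ℂ) = a at *
  generalize ((ω ^ 2 - ∑ j, g j ^ 2 : ℝ) : ℂ) = b at *
  generalize ((∑ j, k j * g j : ℝ) : ℂ) = c at *
  rcases scalars_ne with hQ | hG
  · refine mul_right_cancel₀ hQ ?_
    linear_combination b * left - I * c * right - c ^ 2 * Q * I_sq
  · refine mul_right_cancel₀ hG ?_
    linear_combination a * right + I * c * left - c ^ 2 * G * I_sq

lemma le_and_le_add_of_mul_sub_eq_sq {a b c x : ℝ} (hb : 0 ≤ b) (hc : c ^ 2 ≤ a * b)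
    (hx : b < x) (h : (x - a) * (x - b) = c ^ 2) : a ≤ x ∧ x ≤ a + b := by
  constructor
  · refine sub_nonneg.mp (nonneg_of_mul_nonneg_left ?_ (sub_pos.mpr hx))
    exact h ▸ sq_nonneg c
  · refine sub_nonpos.mp (nonpos_of_mul_nonpos_right ?_ (hb.trans_lt hx))
    linarith

lemma IsEigenmode.sq_bounds (hU : IsEigenmode k g ω Q G V) (hg : ∑ j, g j ^ 2 < ω ^ 2)
    (hne : ¬(Q = 0 ∧ G = 0 ∧ V = 0)) :
    ∑ j, k j ^ 2 ≤ ω ^ 2 ∧ ω ^ 2 ≤ ∑ j, k j ^ 2 + ∑ j, g j ^ 2 := by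
  have sum_g_nonneg : 0 ≤ ∑ j, g j ^ 2 := Finset.sum_nonneg fun j _ ↦ sq_nonneg (g j)
  have hω : ω ≠ 0 := sq_pos_iff.mp (sum_g_nonneg.trans_lt hg)
  exact le_and_le_add_of_mul_sub_eq_sq sum_g_nonneg (Finset.sum_mul_sq_le_sq_mul_sq _ k g) hg
    (hU.gram_det hω hne)

end Eigenmodes

section Eigenfields

variable [Fintype d] [DecidableEq d]

/-- The eigenvalue equation `LU = iωU` for fields `U = (q, H, v)` on `ℝᵈ`, where
`L (q, H, v) = (div v, -g · v, ∇q + H g)`. The operator `L_ε` of the paper is the case `d = 3`,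
`g = (0, 0, η)`, with the vertical velocity `w` as the last component of `v`. -/
structure IsEigenfield (g : d → ℝ) (ω : ℝ) (q H : (d → ℝ) → ℂ) (v : d → (d → ℝ) → ℂ) : Prop where
  divergence : ∀ p, ∑ j, fderiv ℝ (v j) p (Pi.single j 1) = I * ω * q p
  buoyancy : ∀ p, -∑ j, g j * v j p = I * ω * H p
  gradient : ∀ j p, fderiv ℝ q p (Pi.single j 1) + g j * H p = I * ω * v j p

variable {g : d → ℝ} {ω : ℝ}

lemma IsEigenfield.isEigenmode {Q G : C(UnitAddTorus d, ℂ)} {V : d → C(UnitAddTorus d, ℂ)}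
    (hU : IsEigenfield g ω (Q ∘ torusProj) (G ∘ torusProj) fun j ↦ V j ∘ torusProj)
    (hQ : ContDiff ℝ 1 (Q ∘ torusProj)) (hV : ∀ j, ContDiff ℝ 1 (V j ∘ torusProj)) (n : d → ℤ) :
    IsEigenmode (fun j ↦ 2 * Real.pi * n j) g ω (mFourierCoeffLinear n Q)
      (mFourierCoeffLinear n G) fun j ↦ mFourierCoeffLinear n (V j) := by
  choose Q' hQ' coeff_Q' using exists_partialDeriv_mFourierCoeffLinear hQ
  choose V' hV' coeff_V' using fun j ↦ exists_partialDeriv_mFourierCoeffLinear (hV j)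
  have ext_torus {F₁ F₂ : C(UnitAddTorus d, ℂ)} (h : ∀ p, F₁ (torusProj p) = F₂ (torusProj p)) :
      F₁ = F₂ :=
    ContinuousMap.ext (isOpenQuotientMap_torusProj.surjective.forall.mpr h)
  have divergence : ∑ j, V' j j = (I * ω) • Q :=
    ext_torus fun p ↦ by simpa [hV'] using hU.divergence p
  have buoyancy : -∑ j, (g j : ℂ) • V j = (I * ω) • G :=
    ext_torus fun p ↦ by simpa using hU.buoyancy p
  have gradient (j : d) : Q' j + (g j : ℂ) • G = (I * ω) • V j :=
    ext_torus fun p ↦ by simpa [hQ'] using hU.gradient j p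
  refine ⟨?_, ?_, fun j ↦ ?_⟩
  · simpa [coeff_V'] using congrArg (mFourierCoeffLinear n) divergence
  · simpa using congrArg (mFourierCoeffLinear n) buoyancy
  · simpa [coeff_Q'] using congrArg (mFourierCoeffLinear n) (gradient j)

variable {q H : (d → ℝ) → ℂ} {v : d → (d → ℝ) → ℂ}

lemma IsEigenfield.exists_eigenmode (hU : IsEigenfield g ω q H v)
    (hq : ContDiff ℝ 1 q) (hH : Continuous H) (hv : ∀ j, ContDiff ℝ 1 (v j))
    (hqp : ∀ i, Function.Periodic q (Pi.single i 1))
    (hHp : ∀ i, Function.Periodic H (Pi.single i 1))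
    (hvp : ∀ j i, Function.Periodic (v j) (Pi.single i 1))
    (hne : ∃ p, ¬(q p = 0 ∧ H p = 0 ∧ ∀ j, v j p = 0)) :
    ∃ (n : d → ℤ) (Q G : ℂ) (V : d → ℂ),
      IsEigenmode (fun j ↦ 2 * Real.pi * n j) g ω Q G V ∧ ¬(Q = 0 ∧ G = 0 ∧ V = 0) := by
  obtain ⟨Q, rfl⟩ := exists_comp_torusProj_eq hq.continuous hqp
  obtain ⟨G, rfl⟩ := exists_comp_torusProj_eq hH hHp
  choose V hV using fun j ↦ exists_comp_torusProj_eq (hv j).continuous (hvp j)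
  obtain rfl : (fun j ↦ V j ∘ torusProj) = v := funext hV
  suffices ∃ n, ¬(mFourierCoeffLinear n Q = 0 ∧ mFourierCoeffLinear n G = 0 ∧
      (fun j ↦ mFourierCoeffLinear n (V j)) = 0) from
    this.imp fun n hn ↦ ⟨_, _, _, hU.isEigenmode hq hv n, hn⟩
  by_contra! all_coeff_zero
  obtain ⟨p, hp⟩ := hne
  have Q_eq_zero : Q = 0 := eq_zero_of_mFourierCoeffLinear_eq_zero fun n ↦ (all_coeff_zero n).1
  have G_eq_zero : G = 0 := eq_zero_of_mFourierCoeffLinear_eq_zero fun n ↦ (all_coeff_zero n).2.1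
  have V_eq_zero (j : d) : V j = 0 :=
    eq_zero_of_mFourierCoeffLinear_eq_zero fun n ↦ congrFun (all_coeff_zero n).2.2 j
  exact hp (by simp [Q_eq_zero, G_eq_zero, V_eq_zero])

theorem stmt_3_general (hU : IsEigenfield g ω q H v)
    (hq : ContDiff ℝ 1 q) (hH : Continuous H) (hv : ∀ j, ContDiff ℝ 1 (v j))
    (hqp : ∀ i, Function.Periodic q (Pi.single i 1))
    (hHp : ∀ i, Function.Periodic H (Pi.single i 1))
    (hvp : ∀ j i, Function.Periodic (v j) (Pi.single i 1))
    (hne : ∃ p, ¬(q p = 0 ∧ H p = 0 ∧ ∀ j, v j p = 0)) :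
    ∃ m : d → ℤ, ∑ j, (2 * Real.pi * m j) ^ 2 ≤ ω ^ 2 ∧
      ω ^ 2 ≤ ∑ j, (2 * Real.pi * m j) ^ 2 + ∑ j, g j ^ 2 := by
  rcases le_or_gt (ω ^ 2) (∑ j, g j ^ 2) with hω | hω
  · exact ⟨0, by simp [sq_nonneg], by simpa using hω⟩
  · obtain ⟨n, Q, G, V, hmode, hmode_ne⟩ := hU.exists_eigenmode hq hH hv hqp hHp hvp hne
    exact ⟨n, hmode.sq_bounds hω hmode_ne⟩

end Eigenfields

/-- Eigenvalue localization for the perturbed acoustic operator,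
Proposition 1.5 / Lemma 5.1.  Let `0 < ν < 1/2`, `ε ∈ (0,1)`, `η := ε^{1−ν}`.
Let `L_a(q̃,H̃,v,w) := (div_h v + ∂_z w, 0, ∇_h q̃, ∂_z q̃)` and
`L_g(q̃,H̃,v,w) := (0, −w, 0, H̃)` act on smooth fields on `𝕋³` satisfying the
symmetry (SYM) (`q̃, v` even in `z`; `H̃, w` odd in `z`), and set
`L_ε := L_a + ηL_g`.  If `iω` (`ω ∈ ℝ`) is an eigenvalue of `L_ε` — i.e. there
is a nonzero smooth field `U = (q̃,H̃,v,w)` with `L_ε U = iωU` — then there is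
`(k_h,k_z) ∈ (2πℤ)² × 2πℤ` with `|k_h|² + k_z² ≤ ω² ≤ |k_h|² + k_z² + η²`.
(The numbers `±(|k_h|² + k_z²)^{1/2}` are exactly the moduli of the eigenvalues
of `L_a`.) -/
theorem stmt_3 (ν ε η ω : ℝ) (hν0 : 0 < ν) (hν1 : ν < 1 / 2)
    (hε0 : 0 < ε) (hε1 : ε < 1) (hη : η = ε ^ (1 - ν))
    (q H v1 v2 w : Sp → ℂ)
    (hqs : ContDiff ℝ (⊤ : ℕ∞) q) (hHs : ContDiff ℝ (⊤ : ℕ∞) H) (hv1s : ContDiff ℝ (⊤ : ℕ∞) v1)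
    (hv2s : ContDiff ℝ (⊤ : ℕ∞) v2) (hws : ContDiff ℝ (⊤ : ℕ∞) w)
    (hqp : PerC q) (hHp : PerC H) (hv1p : PerC v1) (hv2p : PerC v2) (hwp : PerC w)
    -- the symmetry (SYM)
    (hqsym : ∀ p, q (reflect p) = q p)
    (hHsym : ∀ p, H (reflect p) = -H p)
    (hv1sym : ∀ p, v1 (reflect p) = v1 p)
    (hv2sym : ∀ p, v2 (reflect p) = v2 p)
    (hwsym : ∀ p, w (reflect p) = -w p)
    -- the eigenvalue equation L_ε U = iω U, componentwise
    (heq1 : ∀ p, pdC 0 v1 p + pdC 1 v2 p + pdC 2 w p = I * (ω : ℂ) * q p)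
    (heq2 : ∀ p, -(η : ℂ) * w p = I * (ω : ℂ) * H p)
    (heq3 : ∀ p, pdC 0 q p = I * (ω : ℂ) * v1 p)
    (heq4 : ∀ p, pdC 1 q p = I * (ω : ℂ) * v2 p)
    (heq5 : ∀ p, pdC 2 q p + (η : ℂ) * H p = I * (ω : ℂ) * w p)
    -- the field is nonzero
    (hne : ∃ p : Sp, ¬(q p = 0 ∧ H p = 0 ∧ v1 p = 0 ∧ v2 p = 0 ∧ w p = 0)) :
    ∃ m1 m2 m3 : ℤ,
      (2 * Real.pi * m1) ^ 2 + (2 * Real.pi * m2) ^ 2 + (2 * Real.pi * m3) ^ 2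
          ≤ ω ^ 2 ∧
      ω ^ 2 ≤ (2 * Real.pi * m1) ^ 2 + (2 * Real.pi * m2) ^ 2
          + (2 * Real.pi * m3) ^ 2 + η ^ 2 := by
  have hU : IsEigenfield ![0, 0, η] ω q H ![v1, v2, w] := {
    divergence p := by simpa [Fin.sum_univ_three, pdC] using heq1 p
    buoyancy p := by simpa [Fin.sum_univ_three] using heq2 p
    gradient := by
      simpa [Fin.forall_fin_succ] using ⟨heq3, heq4, heq5⟩ }
  have contDiff_velocity (j : Fin 3) : ContDiff ℝ 1 (![v1, v2, w] j) := by
    fin_cases j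
    exacts [hv1s.of_le (by simp), hv2s.of_le (by simp), hws.of_le (by simp)]
  have periodic_velocity (j : Fin 3) : PerC (![v1, v2, w] j) := by
    fin_cases j
    exacts [hv1p, hv2p, hwp]
  obtain ⟨m, lower, upper⟩ := stmt_3_general hU (hqs.of_le (by simp)) hHs.continuous
    contDiff_velocity (fun i p ↦ hqp p i) (fun i p ↦ hHp p i)
    (fun j i p ↦ periodic_velocity j p i) (by simpa [Fin.forall_fin_succ] using hne)
  exact ⟨m 0, m 1, m 2, by simpa [Fin.sum_univ_three] using lower,
    by simpa [Fin.sum_univ_three] using upper⟩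
end
end

section
/- Algebraic eigenvalue localization (core of Lemma 5.1, identities (5.12)–(5.14)). Let η > 0 and let A, B ∈ ℝ satisfy A ≥ B ≥ 0. If ω ∈ ℝ satisfies ω²(ω² − η²) − Aω² + η²B = 0, then either ω² ≤ η², or A ≤ ω² ≤ A + η². -/
section QuadraticRoot

variable {R : Type*} [CommRing R] [LinearOrder R] [IsStrictOrderedRing R] {e A B x : R}

theorem le_of_quadratic_eq_zero_of_lt (he : 0 ≤ e) (hBA : B ≤ A) (hex : e < x)
    (hroot : x * (x - e) - A * x + e * B = 0) : A ≤ x := by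
  have hprod : 0 ≤ (x - e) * (x - A) :=
    calc
      0 ≤ e * (A - B) := mul_nonneg he (sub_nonneg.2 hBA)
      _ = (x - e) * (x - A) := by linear_combination -hroot
  exact sub_nonneg.1 (nonneg_of_mul_nonneg_right hprod (sub_pos.2 hex))

theorem le_add_of_quadratic_eq_zero_of_pos (he : 0 ≤ e) (hB : 0 ≤ B) (hx : 0 < x)
    (hroot : x * (x - e) - A * x + e * B = 0) : x ≤ A + e := by
  have hprod : 0 ≤ x * (A + e - x) :=
    calc
      0 ≤ e * B := mul_nonneg he hB
      _ = x * (A + e - x) := by linear_combination hroot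
  exact sub_nonneg.1 (nonneg_of_mul_nonneg_right hprod hx)

theorem stmt_4_general (he : 0 ≤ e) (hBA : B ≤ A) (hB : 0 ≤ B)
    (hroot : x * (x - e) - A * x + e * B = 0) : x ≤ e ∨ (A ≤ x ∧ x ≤ A + e) := by
  refine (le_or_gt x e).imp_right fun hex ↦ ⟨?_, ?_⟩
  · exact le_of_quadratic_eq_zero_of_lt he hBA hex hroot
  · exact le_add_of_quadratic_eq_zero_of_pos he hB (he.trans_lt hex) hroot

end QuadraticRoot

/-- Algebraic eigenvalue localization, core of Lemma 5.1,
identities (5.12)–(5.14).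
Let `η > 0` and `A, B ∈ ℝ` with `A ≥ B ≥ 0`.  If `ω ∈ ℝ` satisfies
`ω²(ω² − η²) − Aω² + η²B = 0`, then either `ω² ≤ η²`, or `A ≤ ω² ≤ A + η²`. -/
theorem stmt_4 (η A B ω : ℝ) (hη : 0 < η) (hBA : B ≤ A) (hB : 0 ≤ B)
    (hroot : ω ^ 2 * (ω ^ 2 - η ^ 2) - A * ω ^ 2 + η ^ 2 * B = 0) :
    ω ^ 2 ≤ η ^ 2 ∨ (A ≤ ω ^ 2 ∧ ω ^ 2 ≤ A + η ^ 2) :=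
  stmt_4_general (sq_nonneg η) hBA hB hroot
end

section
/- Internal-wave frequency comparison (estimate (5.44) of Corollary 5.4). Let 0 < η ≤ 1, k_h ∈ 2πℤ² ∖ {0}, k_z ∈ 2πℤ ∖ {0}. Then 0 < ω^gw_sp(η, k_h, k_z) − ω^gw(η, k_h, k_z) ≤ η³; that is, the soundproof internal-wave frequency strictly exceeds the compressible (perturbed) internal-wave frequency, and the difference is O(η³) uniformly in (k_h, k_z). -/
/-- The perturbed (compressible) internal-wave frequency
`ω^gw(η,k_h,k_z) = (2η²a/(S + √A))^{1/2}`, `a = |k_h|²`, `b = k_z²`,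
`S = a + b + η²`, `A = S² − 4η²a`. -/
noncomputable def omegaGW (η a b : ℝ) : ℝ :=
  Real.sqrt (2 * η ^ 2 * a /
    ((a + b + η ^ 2) + Real.sqrt ((a + b + η ^ 2) ^ 2 - 4 * η ^ 2 * a)))

/-- The soundproof internal-wave frequency `ω^gw_sp(η,k_h,k_z) = η|k_h|/(a+b)^{1/2}`. -/
noncomputable def omegaGWsp (η a b : ℝ) : ℝ :=
  η * Real.sqrt a / Real.sqrt (a + b)

/-!
Let `Λ` be the larger root of `λ² − Sλ + η²a = 0`, the squared acoustic frequency. The product of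
the two roots is `η²a`, so `ω^gw = η√a / √Λ`, whereas `ω^gw_sp = η√a / √(a + b)`. Since
`a + b < Λ ≤ a + b + η²`, the difference is positive, and the tangent-line bound for the convex
function `x ↦ 1 / √x` at `a + b` gives
`ω^gw_sp − ω^gw ≤ η√a · η² / (2 (a + b)^{3/2}) ≤ η³ / (2 (a + b))`.
-/

/-- The squared acoustic-wave frequency: the larger root `(S + √A) / 2` of the characteristic
quartic, viewed as a quadratic in `ω²`. It is the quantity that replaces `a + b` when passing from
the soundproof to the compressible internal-wave frequency. -/
noncomputable def acousticFreqSq (η a b : ℝ) : ℝ :=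
  ((a + b + η ^ 2) + √((a + b + η ^ 2) ^ 2 - 4 * η ^ 2 * a)) / 2

theorem inv_sqrt_sub_inv_sqrt_le {x y : ℝ} (hx : 0 < x) (hy : 0 < y) :
    (√x)⁻¹ - (√y)⁻¹ ≤ (y - x) / (2 * x * √x) := by
  obtain ⟨s, hs, rfl⟩ : ∃ s, 0 < s ∧ s ^ 2 = x := ⟨√x, Real.sqrt_pos.2 hx, Real.sq_sqrt hx.le⟩
  obtain ⟨t, ht, rfl⟩ : ∃ t, 0 < t ∧ t ^ 2 = y := ⟨√y, Real.sqrt_pos.2 hy, Real.sq_sqrt hy.le⟩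
  rw [Real.sqrt_sq hs.le, Real.sqrt_sq ht.le, ← sub_nonneg]
  have gap_eq : (t ^ 2 - s ^ 2) / (2 * s ^ 2 * s) - (s⁻¹ - t⁻¹) =
      (t - s) ^ 2 * (t + 2 * s) / (2 * s ^ 3 * t) := by
    field_simp
    ring
  rw [gap_eq]
  positivity

section

variable {η a b : ℝ}

theorem add_lt_acousticFreqSq (hη : η ≠ 0) (hb : 0 < b) : a + b < acousticFreqSq η a b := by
  have lt_sqrt_discrim : a + b - η ^ 2 < √((a + b + η ^ 2) ^ 2 - 4 * η ^ 2 * a) := by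
    apply Real.lt_sqrt_of_sq_lt
    have : 0 < 4 * η ^ 2 * b := by positivity
    linarith
  unfold acousticFreqSq
  linarith

theorem acousticFreqSq_le (ha : 0 ≤ a) (hb : 0 ≤ b) : acousticFreqSq η a b ≤ a + b + η ^ 2 := by
  have sqrt_discrim_le : √((a + b + η ^ 2) ^ 2 - 4 * η ^ 2 * a) ≤ a + b + η ^ 2 :=
    Real.sqrt_le_iff.2 ⟨by positivity, sub_le_self _ (by positivity)⟩
  unfold acousticFreqSq
  linarith

theorem omegaGW_eq_div_sqrt_acousticFreqSq (hη : 0 ≤ η) (ha : 0 ≤ a) :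
    omegaGW η a b = η * √a / √(acousticFreqSq η a b) := by
  have root_eq : 2 * η ^ 2 * a / ((a + b + η ^ 2) + √((a + b + η ^ 2) ^ 2 - 4 * η ^ 2 * a)) =
      η ^ 2 * a / acousticFreqSq η a b := by
    rw [acousticFreqSq, div_div_eq_mul_div]
    ring
  rw [omegaGW, root_eq, Real.sqrt_div (by positivity), Real.sqrt_mul (sq_nonneg η),
    Real.sqrt_sq hη]

theorem omegaGW_lt_omegaGWsp (hη : 0 < η) (ha : 0 < a) (hb : 0 < b) :
    omegaGW η a b < omegaGWsp η a b := by
  rw [omegaGW_eq_div_sqrt_acousticFreqSq hη.le ha.le, omegaGWsp]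
  gcongr
  exact add_lt_acousticFreqSq hη.ne' hb

theorem omegaGWsp_sub_omegaGW_le (hη : 0 < η) (ha : 0 ≤ a) (hb : 0 < b) :
    omegaGWsp η a b - omegaGW η a b ≤ η ^ 3 / (2 * (a + b)) := by
  have hab : 0 < a + b := by positivity
  have hlt : a + b < acousticFreqSq η a b := add_lt_acousticFreqSq hη.ne' hb
  calc omegaGWsp η a b - omegaGW η a b
      = η * √a * ((√(a + b))⁻¹ - (√(acousticFreqSq η a b))⁻¹) := by
        rw [omegaGW_eq_div_sqrt_acousticFreqSq hη.le ha, omegaGWsp]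
        ring
    _ ≤ η * √a * ((acousticFreqSq η a b - (a + b)) / (2 * (a + b) * √(a + b))) := by
        gcongr
        exact inv_sqrt_sub_inv_sqrt_le hab (hab.trans hlt)
    _ ≤ η * √(a + b) * (η ^ 2 / (2 * (a + b) * √(a + b))) := by
        gcongr
        · exact le_add_of_nonneg_right hb.le
        · exact sub_le_iff_le_add'.2 (acousticFreqSq_le ha hb.le)
    _ = η ^ 3 / (2 * (a + b)) := by field_simp

theorem stmt_10_general (hη : 0 < η) (ha : 0 < a) (hb : 0 < b) (hab : 1 ≤ 2 * (a + b)) :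
    0 < omegaGWsp η a b - omegaGW η a b ∧ omegaGWsp η a b - omegaGW η a b ≤ η ^ 3 :=
  ⟨sub_pos.2 (omegaGW_lt_omegaGWsp hη ha hb),
    (omegaGWsp_sub_omegaGW_le hη ha.le hb).trans (div_le_self (by positivity) hab)⟩

end

theorem one_le_two_pi_mul_intCast_sq {k : ℤ} (hk : k ≠ 0) : 1 ≤ (2 * Real.pi * (k : ℝ)) ^ 2 := by
  rw [one_le_sq_iff_one_le_abs, abs_mul, abs_of_pos Real.two_pi_pos]
  have one_le_abs : (1 : ℝ) ≤ |(k : ℝ)| := mod_cast Int.one_le_abs hk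
  exact one_le_mul_of_one_le_of_one_le (by linarith [Real.pi_gt_three]) one_le_abs

theorem two_pi_mul_intCast_sq_add_sq_pos {m : Fin 2 → ℤ} (hm : m ≠ 0) :
    0 < (2 * Real.pi * (m 0 : ℝ)) ^ 2 + (2 * Real.pi * (m 1 : ℝ)) ^ 2 := by
  rcases Fin.exists_fin_two.1 (Function.ne_iff.1 hm) with h0 | h1
  · linarith [one_le_two_pi_mul_intCast_sq h0, sq_nonneg (2 * Real.pi * (m 1 : ℝ))]
  · linarith [one_le_two_pi_mul_intCast_sq h1, sq_nonneg (2 * Real.pi * (m 0 : ℝ))]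

/-- Internal-wave frequency comparison, estimate (5.44) of
Corollary 5.4.  Let `0 < η ≤ 1`, `k_h ∈ 2πℤ² ∖ {0}`, `k_z ∈ 2πℤ ∖ {0}`.
Then `0 < ω^gw_sp(η,k_h,k_z) − ω^gw(η,k_h,k_z) ≤ η³`: the soundproof
internal-wave frequency strictly exceeds the compressible (perturbed) one,
and the difference is `O(η³)` uniformly in `(k_h,k_z)`. -/
theorem stmt_10 (η : ℝ) (hη0 : 0 < η) (hη1 : η ≤ 1)
    (m : Fin 2 → ℤ) (hm : m ≠ 0) (n : ℤ) (hn : n ≠ 0) :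
    let a : ℝ := (2 * Real.pi * (m 0 : ℝ)) ^ 2 + (2 * Real.pi * (m 1 : ℝ)) ^ 2
    let b : ℝ := (2 * Real.pi * (n : ℝ)) ^ 2
    0 < omegaGWsp η a b - omegaGW η a b ∧
    omegaGWsp η a b - omegaGW η a b ≤ η ^ 3 := by
  have ha := two_pi_mul_intCast_sq_add_sq_pos hm
  have hb := one_le_two_pi_mul_intCast_sq hn
  exact stmt_10_general hη0 ha (by linarith) (by linarith)
end

section
/- Acoustic frequency comparison (estimate (5.46) of Corollary 5.4). Let 0 < η ≤ 1, k_h ∈ 2πℤ², k_z ∈ 2πℤ with (k_h, k_z) ≠ (0, 0). If k_z ≠ 0, then (ω^aw_a(k_h,k_z))² < (ω^aw(η,k_h,k_z))² ≤ (ω^aw_a(k_h,k_z))² + η², and consequently 0 < ω^aw(η,k_h,k_z) − ω^aw_a(k_h,k_z) ≤ η²/(4π). If k_z = 0, then ω^aw(η,k_h,0) = ω^aw_a(k_h,0). -/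
/-- The perturbed acoustic frequency
`ω^aw(η,k_h,k_z) = ((S + √A)/2)^{1/2}`, with `a = |k_h|²`, `b = k_z²`,
`S = a + b + η²`, `A = S² − 4η²a`. -/
noncomputable def omegaAW (η a b : ℝ) : ℝ :=
  Real.sqrt (((a + b + η ^ 2) + Real.sqrt ((a + b + η ^ 2) ^ 2 - 4 * η ^ 2 * a)) / 2)

/-- The pure acoustic frequency `ω^aw_a(k_h,k_z) = (a + b)^{1/2}`. -/
noncomputable def omegaAWa (a b : ℝ) : ℝ := Real.sqrt (a + b)

/-!
The discriminant has the two forms `A = S² - 4η²a = (a + b - η²)² + 4η²b`. The first gives `√A ≤ S`,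
hence the upper bound on `(ω^aw)²`; the second gives `√A > a + b - η²` when `b > 0`, hence the lower
bound, and `√A = |a - η²|` when `b = 0`, so that `ω^aw = max (ω^aw_a) η` there. The bound on the
difference follows since `2x(y - x) ≤ y² - x²`, and a nonzero vector of the lattice `2πℤᵈ` has norm
at least `2π`.
-/

theorem sub_le_div_two_mul_of_sq_le_sq_add {x y c : ℝ} (hx : 0 < x) (h : y ^ 2 ≤ x ^ 2 + c) :
    y - x ≤ c / (2 * x) := by
  rw [le_div_iff₀ (by positivity)]
  linarith [sq_nonneg (y - x)]

theorem sq_le_sq_mul_intCast (c : ℝ) {z : ℤ} (hz : z ≠ 0) : c ^ 2 ≤ (c * z) ^ 2 := by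
  have one_le_sq : (1 : ℝ) ≤ (z : ℝ) ^ 2 := by
    exact_mod_cast (one_le_sq_iff_one_le_abs z).mpr (Int.one_le_abs hz)
  rw [mul_pow]
  exact le_mul_of_one_le_right (sq_nonneg c) one_le_sq

theorem sq_le_sum_sq_mul_intCast {ι : Type*} [Fintype ι] (c : ℝ) {m : ι → ℤ} (hm : m ≠ 0) :
    c ^ 2 ≤ ∑ i, (c * m i) ^ 2 := by
  obtain ⟨i, hi⟩ := Function.ne_iff.mp hm
  calc c ^ 2 ≤ (c * m i) ^ 2 := sq_le_sq_mul_intCast c hi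
    _ ≤ ∑ i, (c * m i) ^ 2 :=
      Finset.single_le_sum (f := fun i ↦ (c * m i) ^ 2) (fun _ _ ↦ sq_nonneg _) (Finset.mem_univ i)

section Frequencies

variable {η a b : ℝ}

theorem sq_omegaAWa (hab : 0 ≤ a + b) : omegaAWa a b ^ 2 = a + b :=
  Real.sq_sqrt hab

theorem sq_omegaAW (hab : 0 ≤ a + b) :
    omegaAW η a b ^ 2 =
      ((a + b + η ^ 2) + √((a + b + η ^ 2) ^ 2 - 4 * η ^ 2 * a)) / 2 :=
  Real.sq_sqrt (by positivity)

theorem discriminant_eq_sq_sub_add (η a b : ℝ) :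
    (a + b + η ^ 2) ^ 2 - 4 * η ^ 2 * a = (a + b - η ^ 2) ^ 2 + 4 * η ^ 2 * b := by
  ring

theorem sq_omegaAWa_lt_sq_omegaAW (hη : η ≠ 0) (hab : 0 ≤ a + b) (hb : 0 < b) :
    omegaAWa a b ^ 2 < omegaAW η a b ^ 2 := by
  have lt_sqrt : a + b - η ^ 2 < √((a + b + η ^ 2) ^ 2 - 4 * η ^ 2 * a) := by
    rw [discriminant_eq_sq_sub_add]
    exact Real.lt_sqrt_of_sq_lt (lt_add_of_pos_right _ (by positivity))
  rw [sq_omegaAWa hab, sq_omegaAW hab]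
  linarith

theorem sq_omegaAW_le_sq_omegaAWa_add (ha : 0 ≤ a) (hab : 0 ≤ a + b) :
    omegaAW η a b ^ 2 ≤ omegaAWa a b ^ 2 + η ^ 2 := by
  have sqrt_le : √((a + b + η ^ 2) ^ 2 - 4 * η ^ 2 * a) ≤ a + b + η ^ 2 :=
    Real.sqrt_le_iff.mpr ⟨by positivity, sub_le_self _ (by positivity)⟩
  rw [sq_omegaAWa hab, sq_omegaAW hab]
  linarith

theorem omegaAWa_lt_omegaAW (hη : η ≠ 0) (hab : 0 ≤ a + b) (hb : 0 < b) :
    omegaAWa a b < omegaAW η a b :=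
  lt_of_pow_lt_pow_left₀ 2 (Real.sqrt_nonneg _) (sq_omegaAWa_lt_sq_omegaAW hη hab hb)

theorem omegaAW_sub_omegaAWa_le (ha : 0 ≤ a) (hab : 0 < a + b) :
    omegaAW η a b - omegaAWa a b ≤ η ^ 2 / (2 * omegaAWa a b) :=
  sub_le_div_two_mul_of_sq_le_sq_add (Real.sqrt_pos.mpr hab)
    (sq_omegaAW_le_sq_omegaAWa_add ha hab.le)

theorem omegaAW_zero_right (hη : 0 ≤ η) : omegaAW η a 0 = max (omegaAWa a 0) η := by
  have larger_root : (a + 0 + η ^ 2 + |a + 0 - η ^ 2|) / 2 = max a (η ^ 2) := by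
    rw [sup_eq_half_smul_add_add_abs_sub' ℝ, abs_sub_comm (η ^ 2), smul_eq_mul, add_zero]
    ring
  calc omegaAW η a 0 = √(max a (η ^ 2)) := by
        rw [omegaAW, discriminant_eq_sq_sub_add, mul_zero, add_zero ((a + 0 - η ^ 2) ^ 2),
          Real.sqrt_sq_eq_abs, larger_root]
    _ = max (√a) (√(η ^ 2)) := Real.sqrt_monotone.map_max
    _ = max (omegaAWa a 0) η := by rw [Real.sqrt_sq hη, omegaAWa, add_zero]

end Frequencies

theorem stmt_11_general {η a : ℝ} (hη : 0 < η) (ha : 0 ≤ a) (n : ℤ) :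
    let b : ℝ := (2 * Real.pi * (n : ℝ)) ^ 2
    (n ≠ 0 →
      (omegaAWa a b ^ 2 < omegaAW η a b ^ 2 ∧
        omegaAW η a b ^ 2 ≤ omegaAWa a b ^ 2 + η ^ 2) ∧
      (0 < omegaAW η a b - omegaAWa a b ∧
        omegaAW η a b - omegaAWa a b ≤ η ^ 2 / (4 * Real.pi))) ∧
    (n = 0 → omegaAW η a b = max (omegaAWa a b) η) := by
  intro b
  refine ⟨fun hn ↦ ?_, fun hn ↦ ?_⟩
  · have hb : 0 < b := by positivity
    have hab : 0 < a + b := by positivity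
    have two_pi_le : 2 * Real.pi ≤ omegaAWa a b :=
      Real.le_sqrt_of_sq_le (le_add_of_nonneg_of_le ha (sq_le_sq_mul_intCast _ hn))
    refine ⟨⟨sq_omegaAWa_lt_sq_omegaAW hη.ne' hab.le hb, sq_omegaAW_le_sq_omegaAWa_add ha hab.le⟩,
      sub_pos.mpr (omegaAWa_lt_omegaAW hη.ne' hab.le hb), ?_⟩
    calc omegaAW η a b - omegaAWa a b ≤ η ^ 2 / (2 * omegaAWa a b) := omegaAW_sub_omegaAWa_le ha hab
      _ ≤ η ^ 2 / (4 * Real.pi) :=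
        div_le_div_of_nonneg_left (sq_nonneg η) (by positivity) (by linarith)
  · have hb : b = 0 := by simp [b, hn]
    rw [hb, omegaAW_zero_right hη.le]

/-- Acoustic frequency comparison, estimate (5.46) of
Corollary 5.4.  Let `0 < η ≤ 1`, `k_h ∈ 2πℤ²`, `k_z ∈ 2πℤ`,
`(k_h,k_z) ≠ (0,0)`.  If `k_z ≠ 0` then
`(ω^aw_a)² < (ω^aw)² ≤ (ω^aw_a)² + η²`, and consequently
`0 < ω^aw − ω^aw_a ≤ η²/(4π)`.  If `k_z = 0` then `ω^aw = ω^aw_a`. -/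
theorem stmt_11 (η : ℝ) (hη0 : 0 < η) (hη1 : η ≤ 1)
    (m : Fin 2 → ℤ) (n : ℤ) (hmn : ¬(m = 0 ∧ n = 0)) :
    let a : ℝ := (2 * Real.pi * (m 0 : ℝ)) ^ 2 + (2 * Real.pi * (m 1 : ℝ)) ^ 2
    let b : ℝ := (2 * Real.pi * (n : ℝ)) ^ 2
    (n ≠ 0 →
      (omegaAWa a b ^ 2 < omegaAW η a b ^ 2 ∧
        omegaAW η a b ^ 2 ≤ omegaAWa a b ^ 2 + η ^ 2) ∧
      (0 < omegaAW η a b - omegaAWa a b ∧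
        omegaAW η a b - omegaAWa a b ≤ η ^ 2 / (4 * Real.pi))) ∧
    (n = 0 → omegaAW η a b = omegaAWa a b) := by
  intro a b
  obtain ⟨comparison, eq_max⟩ := stmt_11_general hη0 (by positivity : 0 ≤ a) n
  refine ⟨comparison, fun hn ↦ (eq_max hn).trans (max_eq_left ?_)⟩
  have hm : m ≠ 0 := fun hm ↦ hmn ⟨hm, hn⟩
  have sq_le : (2 * Real.pi) ^ 2 ≤ a := by
    simpa only [Fin.sum_univ_two] using sq_le_sum_sq_mul_intCast (2 * Real.pi) hm
  calc η ≤ 2 * Real.pi := by linarith [Real.pi_gt_three]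
    _ ≤ omegaAWa a b := Real.le_sqrt_of_sq_le (le_add_of_le_of_nonneg sq_le (sq_nonneg _))
end

section
/- Three-scale classification of eigenfrequencies (Proposition 1.5, second part). Let η > 0, k_h ∈ ℝ² ∖ {0}, k_z ∈ ℝ with η² ≤ |k_h|² + k_z². Then the internal-wave frequency satisfies η|k_h|/(2(|k_h|² + k_z²))^{1/2} ≤ ω^gw(η,k_h,k_z) ≤ η, and the perturbed acoustic frequency satisfies (|k_h|² + k_z²)^{1/2} ≤ ω^aw(η,k_h,k_z) ≤ (|k_h|² + k_z² + η²)^{1/2}. Consequently, with η = ε^{1−ν}, the eigenfrequencies of the operator ε^{−1}L_ε = ε^{−1}L_a + ε^{−ν}L_g fall into three families: the mean-flow frequency 0, internal-wave frequencies of size O(ε^{−ν}), and perturbed acoustic frequencies of size O(ε^{−1}). -/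
/-!
The squared acoustic frequency is the larger root `r` of `X² - S X + η² a`, and by Vieta the squared
internal-wave frequency is `η² a / r`. At `X = a + b` the quadratic takes the value `-η² b ≤ 0`,
so `a + b ≤ r`, while `r` is at most the sum of the roots `S = a + b + η²`. All four bounds
follow from `a + b ≤ r ≤ S`.
-/

/-- The larger root of the monic quadratic `X² - s X + p` with sum of roots `s` and product of
roots `p`. It is meaningful for `4 * p ≤ s ^ 2`; otherwise `√` is `0` and the value is `s / 2`. -/
noncomputable def largerRoot (s p : ℝ) : ℝ :=
  (s + √(s ^ 2 - 4 * p)) / 2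

theorem le_largerRoot_of_quadratic_nonpos {s p x : ℝ} (h : x ^ 2 - s * x + p ≤ 0) :
    x ≤ largerRoot s p := by
  have le_sqrt_discrim : 2 * x - s ≤ √(s ^ 2 - 4 * p) :=
    Real.le_sqrt_of_sq_le (by linarith)
  unfold largerRoot
  linarith

theorem largerRoot_le_sum {s p : ℝ} (hs : 0 ≤ s) (hp : 0 ≤ p) : largerRoot s p ≤ s := by
  have sqrt_discrim_le : √(s ^ 2 - 4 * p) ≤ s :=
    Real.sqrt_le_iff.2 ⟨hs, by linarith⟩
  unfold largerRoot
  linarith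

section Frequencies

variable {η a b : ℝ}

theorem omegaAW_eq_sqrt_largerRoot (η a b : ℝ) :
    omegaAW η a b = √(largerRoot (a + b + η ^ 2) (η ^ 2 * a)) := by
  simp only [omegaAW, largerRoot, mul_assoc]

theorem omegaGW_eq_sqrt_div_largerRoot (η a b : ℝ) :
    omegaGW η a b = √(η ^ 2 * a / largerRoot (a + b + η ^ 2) (η ^ 2 * a)) := by
  simp only [omegaGW, largerRoot, mul_assoc, div_div_eq_mul_div, mul_comm _ (2 : ℝ)]

theorem add_le_largerRoot (η a : ℝ) (hb : 0 ≤ b) :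
    a + b ≤ largerRoot (a + b + η ^ 2) (η ^ 2 * a) := by
  apply le_largerRoot_of_quadratic_nonpos
  calc (a + b) ^ 2 - (a + b + η ^ 2) * (a + b) + η ^ 2 * a
    _ = -(η ^ 2 * b) := by ring
    _ ≤ 0 := neg_nonpos.2 (by positivity)

theorem sqrt_add_le_omegaAW (η a : ℝ) (hb : 0 ≤ b) : √(a + b) ≤ omegaAW η a b := by
  rw [omegaAW_eq_sqrt_largerRoot]
  exact Real.sqrt_le_sqrt (add_le_largerRoot η a hb)

theorem omegaAW_le_sqrt_add_sq (η : ℝ) (ha : 0 ≤ a) (hb : 0 ≤ b) :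
    omegaAW η a b ≤ √(a + b + η ^ 2) := by
  rw [omegaAW_eq_sqrt_largerRoot]
  exact Real.sqrt_le_sqrt (largerRoot_le_sum (by positivity) (by positivity))

theorem omegaGW_le (hη : 0 ≤ η) (ha : 0 ≤ a) (hb : 0 ≤ b) : omegaGW η a b ≤ η := by
  have le_root : a ≤ largerRoot (a + b + η ^ 2) (η ^ 2 * a) :=
    (le_add_of_nonneg_right hb).trans (add_le_largerRoot η a hb)
  rw [omegaGW_eq_sqrt_div_largerRoot]
  refine Real.sqrt_le_iff.2 ⟨hη, div_le_of_le_mul₀ (ha.trans le_root) (sq_nonneg η) ?_⟩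
  gcongr

theorem mul_sqrt_div_sqrt_add_sq_le_omegaGW (hη : 0 ≤ η) (ha : 0 < a) (hb : 0 ≤ b) :
    η * √a / √(a + b + η ^ 2) ≤ omegaGW η a b := by
  have root_pos : 0 < largerRoot (a + b + η ^ 2) (η ^ 2 * a) :=
    (add_pos_of_pos_of_nonneg ha hb).trans_le (add_le_largerRoot η a hb)
  calc η * √a / √(a + b + η ^ 2)
    _ = √(η ^ 2 * a / (a + b + η ^ 2)) := by
      rw [Real.sqrt_div (by positivity), Real.sqrt_mul (sq_nonneg η), Real.sqrt_sq hη]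
    _ ≤ √(η ^ 2 * a / largerRoot (a + b + η ^ 2) (η ^ 2 * a)) := by
      gcongr
      exact largerRoot_le_sum (by positivity) (by positivity)
    _ = omegaGW η a b := (omegaGW_eq_sqrt_div_largerRoot η a b).symm

theorem mul_sqrt_div_sqrt_two_mul_le_omegaGW (hη : 0 ≤ η) (ha : 0 < a) (hb : 0 ≤ b)
    (hsmall : η ^ 2 ≤ a + b) : η * √a / √(2 * (a + b)) ≤ omegaGW η a b :=
  calc η * √a / √(2 * (a + b))
    _ ≤ η * √a / √(a + b + η ^ 2) := by
      gcongr
      linarith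
    _ ≤ omegaGW η a b := mul_sqrt_div_sqrt_add_sq_le_omegaGW hη ha hb

end Frequencies

/-- Three-scale classification of eigenfrequencies,
Proposition 1.5, second part — quantitative content.
Let `η > 0`, `k_h ∈ ℝ² ∖ {0}`, `k_z ∈ ℝ` with `η² ≤ |k_h|² + k_z²`.  Then the
internal-wave frequency satisfies
`η|k_h|/(2(|k_h|² + k_z²))^{1/2} ≤ ω^gw(η,k_h,k_z) ≤ η`,
and the perturbed acoustic frequency satisfies
`(|k_h|² + k_z²)^{1/2} ≤ ω^aw(η,k_h,k_z) ≤ (|k_h|² + k_z² + η²)^{1/2}`.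
(Consequently, with `η = ε^{1−ν}`, the eigenfrequencies of
`ε^{−1}L_ε = ε^{−1}L_a + ε^{−ν}L_g` fall into the three families: mean flow `0`,
internal waves of size `O(ε^{−ν})`, and perturbed acoustic waves of size
`O(ε^{−1})`.) -/
theorem stmt_12 (η : ℝ) (hη : 0 < η) (kh : Fin 2 → ℝ) (hkh : kh ≠ 0) (kz : ℝ)
    (hsmall : η ^ 2 ≤ kh 0 ^ 2 + kh 1 ^ 2 + kz ^ 2) :
    let a : ℝ := kh 0 ^ 2 + kh 1 ^ 2
    let b : ℝ := kz ^ 2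
    (η * Real.sqrt a / Real.sqrt (2 * (a + b)) ≤ omegaGW η a b ∧
      omegaGW η a b ≤ η) ∧
    (Real.sqrt (a + b) ≤ omegaAW η a b ∧
      omegaAW η a b ≤ Real.sqrt (a + b + η ^ 2)) := by
  intro a b
  have ha : 0 < a := by
    simpa [a, dotProduct, Fin.sum_univ_two, sq] using Matrix.dotProduct_self_star_pos_iff.2 hkh
  have hb : 0 ≤ b := sq_nonneg kz
  exact ⟨⟨mul_sqrt_div_sqrt_two_mul_le_omegaGW hη.le ha hb hsmall, omegaGW_le hη.le ha.le hb⟩,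
    sqrt_add_le_omegaAW η a hb, omegaAW_le_sqrt_add_sq η ha.le hb⟩
end
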